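/- Let Q be a finite quiver without loops and multiedges and let R be a lluf subquiver of Q with |π_0(R)| = |π_0(Q)| + 1. If DE(R) is a facet of DE(Q), then the contraction Q/R is acyclic. -/

import Mathlib

open scoped BigOperators

/-- The vector `ε_(v,w) = e_v - e_w` in `ℝ^V`. -/
def epsVec {V : Type*} [DecidableEq V] (e : V × V) : V → ℝ :=
  fun u => (if u = e.1 then (1 : ℝ) else 0) - (if u = e.2 then (1 : ℝ) else 0)

/-- The directed edge polytope of the quiver with edge set `E`. -/
def DE {V : Type*} [DecidableEq V] (E : Set (V × V)) : Set (V → ℝ) :=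
  convexHull ℝ (epsVec '' E)

/-- The edge relation of a quiver. -/
def edgeRel {V : Type*} (E : Set (V × V)) : V → V → Prop := fun a b => (a, b) ∈ E

/-- Number of connected components (with respect to undirected walks). -/
noncomputable def numComponents {V : Type*} (E : Set (V × V)) : ℕ :=
  Nat.card (Quot (Relation.EqvGen (edgeRel E)))

/-- `E` admits a rank function. -/
def HasRankFn {V : Type*} (E : Set (V × V)) : Prop :=
  ∃ ρ : V → ℝ, ∀ e ∈ E, ρ e.1 + 1 = ρ e.2

open Classical in
/-- Dimension of a polytope: dimension of its affine hull, `-1` for the empty set. -/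
noncomputable def polyDim {V : Type*} (s : Set (V → ℝ)) : ℤ :=
  if s = ∅ then -1 else (Module.finrank ℝ (affineSpan ℝ s).direction : ℤ)

/-- `F` is a face of `P`: `F = P` or `F` is the intersection of `P`
with a supporting hyperplane. -/
def IsFaceOf {V : Type*} (F P : Set (V → ℝ)) : Prop :=
  F = P ∨ ∃ (l : (V → ℝ) →ₗ[ℝ] ℝ) (c : ℝ), (∀ x ∈ P, l x ≤ c) ∧ F = {x ∈ P | l x = c}

/-- `F` is a facet of `P`: a face of dimension `dim P - 1`. -/
def IsFacetOf {V : Type*} (F P : Set (V → ℝ)) : Prop :=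
  IsFaceOf F P ∧ polyDim F = polyDim P - 1

/-- Each connected component of the subquiver `R1` is a full subquiver of `Q1`. -/
def ComponentsFull {V : Type*} (Q1 R1 : Set (V × V)) : Prop :=
  ∀ v w : V, Relation.EqvGen (edgeRel R1) v w → (v, w) ∈ Q1 → (v, w) ∈ R1

/-- Edge set of the contraction `Q/R`. -/
def contraction {V : Type*} (Q1 R1 : Set (V × V)) :
    Set (Quot (Relation.EqvGen (edgeRel R1)) × Quot (Relation.EqvGen (edgeRel R1))) :=
  {p | ∃ e ∈ Q1 \ R1, p = (Quot.mk _ e.1, Quot.mk _ e.2)}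

/-- A quiver is acyclic if it has no closed directed walk of length `> 1`. -/
def IsAcyclicQ {α : Type*} (E : Set (α × α)) : Prop :=
  ¬ ∃ (n : ℕ) (v : Fin (n + 1) → α), 1 < n ∧ v 0 = v (Fin.last n) ∧
      ∀ i : Fin n, (v i.castSucc, v i.succ) ∈ E

/-!
A facet `DE(R)` of `DE(Q)` is cut out by a linear functional `l` with `l = c` on the edges of `R`
and `l < c` on the remaining edges of `Q`. If `c` can be replaced by `0`, then `v ↦ l (e_v)` is a
potential which is constant along `R` and strictly increasing along `Q ∖ R`, so the contraction has
no directed cycle.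

To replace `c` by `0`, subtract a linear functional that equals `c` on all of `DE(Q)`. Suppose there
is none. Then `c ≠ 0`, and `dim DE(Q)` is the dimension of the linear span of `DE(Q)`, while
`dim DE(R)`, as `l / c` equals `1` on `DE(R)`, is less than the dimension of the linear span of
`DE(R)`. Since `dim DE(R) = dim DE(Q) - 1`, the two spans agree; but the span of the edge vectors
determines the connected components, and `R` and `Q` do not have equally many.
-/

section LinearAlgebra

theorem vectorSpan_le_span {k E : Type*} [Ring k] [AddCommGroup E] [Module k E] (s : Set E) :
    vectorSpan k s ≤ Submodule.span k s := by
  rw [vectorSpan_def, Submodule.span_le]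
  rintro _ ⟨x, hx, y, hy, rfl⟩
  exact sub_mem (Submodule.subset_span hx) (Submodule.subset_span hy)

theorem vectorSpan_lt_span_iff_exists_eq_one {K E : Type*} [Field K] [AddCommGroup E]
    [Module K E] {s : Set E} (hs : s.Nonempty) :
    vectorSpan K s < Submodule.span K s ↔ ∃ f : E →ₗ[K] K, ∀ x ∈ s, f x = 1 := by
  constructor
  · intro hlt
    obtain ⟨x, hxs, hx⟩ : ∃ x ∈ s, x ∉ vectorSpan K s := by
      by_contra! h
      exact hlt.not_ge (Submodule.span_le.2 h)
    obtain ⟨f, hfx, hker⟩ := Submodule.exists_le_ker_of_notMem hx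
    refine ⟨(f x)⁻¹ • f, fun y hy ↦ ?_⟩
    have hyx : f y = f x := by
      simpa [sub_eq_zero] using hker (vsub_mem_vectorSpan K hy hxs)
    simp [hyx, hfx]
  · rintro ⟨f, hf⟩
    obtain ⟨x, hx⟩ := hs
    have hker : vectorSpan K s ≤ LinearMap.ker f := by
      rw [vectorSpan_def, Submodule.span_le]
      rintro _ ⟨y, hy, z, hz, rfl⟩
      simp [hf y hy, hf z hz]
    refine SetLike.lt_iff_le_and_exists.2
      ⟨vectorSpan_le_span s, x, Submodule.subset_span hx, fun hxv ↦ ?_⟩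
    exact one_ne_zero ((hf x hx).symm.trans (hker hxv))

theorem span_convexHull_eq_span {𝕜 E : Type*} [Semiring 𝕜] [PartialOrder 𝕜] [AddCommMonoid E]
    [Module 𝕜 E] (s : Set E) : Submodule.span 𝕜 (convexHull 𝕜 s) = Submodule.span 𝕜 s :=
  le_antisymm
    (Submodule.span_le.2 (convexHull_min Submodule.subset_span (Submodule.convex _)))
    (Submodule.span_mono (subset_convexHull 𝕜 s))

end LinearAlgebra

section Polytope

variable {V : Type*} {F P : Set (V → ℝ)}

theorem polyDim_of_nonempty {s : Set (V → ℝ)} (hs : s.Nonempty) :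
    polyDim s = Module.finrank ℝ (vectorSpan ℝ s) := by
  rw [polyDim, if_neg hs.ne_empty, direction_affineSpan]

theorem polyDim_lt_finrank_span_iff [Finite V] (s : Set (V → ℝ)) :
    polyDim s < Module.finrank ℝ (Submodule.span ℝ s) ↔
      ∃ f : (V → ℝ) →ₗ[ℝ] ℝ, ∀ x ∈ s, f x = 1 := by
  rcases s.eq_empty_or_nonempty with rfl | hs
  · exact iff_of_true (by rw [polyDim, if_pos rfl]; omega) ⟨0, by simp⟩
  rw [polyDim_of_nonempty hs, Nat.cast_lt, ← vectorSpan_lt_span_iff_exists_eq_one hs]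
  refine ⟨fun h ↦ (vectorSpan_le_span s).lt_of_ne fun heq ↦ ?_,
    Submodule.finrank_lt_finrank_of_lt⟩
  rw [heq] at h
  exact h.false

theorem exists_linearMap_eq_const_of_span_lt [Finite V] (hdim : polyDim P ≤ polyDim F + 1)
    (hspan : Submodule.span ℝ F < Submodule.span ℝ P) {l : (V → ℝ) →ₗ[ℝ] ℝ} {c : ℝ}
    (hl : ∀ x ∈ F, l x = c) : ∃ f : (V → ℝ) →ₗ[ℝ] ℝ, ∀ x ∈ P, f x = c := by
  rcases eq_or_ne c 0 with rfl | hc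
  · exact ⟨0, fun _ _ ↦ rfl⟩
  have hF : polyDim F < Module.finrank ℝ (Submodule.span ℝ F) :=
    (polyDim_lt_finrank_span_iff F).2 ⟨c⁻¹ • l, fun x hx ↦ by simp [hl x hx, hc]⟩
  have hFP := Submodule.finrank_lt_finrank_of_lt hspan
  obtain ⟨f, hf⟩ := (polyDim_lt_finrank_span_iff P).1 (by omega)
  exact ⟨c • f, fun x hx ↦ by simp [hf x hx]⟩

theorem isFaceOf_iff_exists_linearMap : IsFaceOf F P ↔
    ∃ (l : (V → ℝ) →ₗ[ℝ] ℝ) (c : ℝ), (∀ x ∈ P, l x ≤ c) ∧ F = {x ∈ P | l x = c} := by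
  refine ⟨?_, Or.inr⟩
  rintro (rfl | h)
  · exact ⟨0, 0, by simp⟩
  · exact h

end Polytope

section EdgePolytope

variable {V : Type*} [DecidableEq V] {Q R : Set (V × V)} {e : V × V}

theorem epsVec_eq_single_sub_single (e : V × V) :
    epsVec e = Pi.single e.1 1 - Pi.single e.2 1 := by
  ext u
  simp [epsVec, Pi.single_apply]

theorem epsVec_mem_DE (he : e ∈ Q) : epsVec e ∈ DE Q :=
  subset_convexHull ℝ _ (Set.mem_image_of_mem _ he)

theorem mem_of_epsVec_mem_DE (hne : e.1 ≠ e.2) (h : epsVec e ∈ DE R) : e ∈ R := by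
  by_contra heR
  -- Among all vectors `ε_f`, only `ε_e` attains the value `2` under this functional.
  let g : (V → ℝ) →ₗ[ℝ] ℝ :=
    LinearMap.proj (R := ℝ) (φ := fun _ ↦ ℝ) e.1 - LinearMap.proj (R := ℝ) (φ := fun _ ↦ ℝ) e.2
  have hg : ∀ f ∈ R, g (epsVec f) ≤ 1 := by
    intro f hf
    have hfe : ¬(e.1 = f.1 ∧ e.2 = f.2) := fun ⟨h₁, h₂⟩ ↦ heR (Prod.ext h₁ h₂ ▸ hf)
    simp only [g, epsVec, LinearMap.sub_apply, LinearMap.proj_apply]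
    split_ifs <;> first | (exfalso; tauto) | norm_num
  have hle : DE R ⊆ {x | g x ≤ 1} :=
    convexHull_min (Set.forall_mem_image.2 hg) (convex_halfSpace_le g.isLinear 1)
  have htwo : g (epsVec e) = 2 := by norm_num [g, epsVec, hne, hne.symm]
  have hone : g (epsVec e) ≤ 1 := hle h
  linarith

theorem IsFaceOf.exists_linearMap_edges (hloop : ∀ v, (v, v) ∉ Q)
    (hface : IsFaceOf (DE R) (DE Q)) :
    ∃ (l : (V → ℝ) →ₗ[ℝ] ℝ) (c : ℝ),
      (∀ x ∈ DE R, l x = c) ∧ ∀ e ∈ Q \ R, l (epsVec e) < c := by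
  obtain ⟨l, c, hle, hF⟩ := isFaceOf_iff_exists_linearMap.1 hface
  refine ⟨l, c, fun x hx ↦ (hF.subset hx).2, fun ⟨v, w⟩ he ↦ ?_⟩
  have hne : v ≠ w := by
    rintro rfl
    exact hloop v he.1
  have heQ : epsVec (v, w) ∈ DE Q := epsVec_mem_DE he.1
  exact (hle _ heQ).lt_of_ne fun h ↦ he.2 (mem_of_epsVec_mem_DE hne (hF.superset ⟨heQ, h⟩))

end EdgePolytope

section Components

variable {V : Type*} [DecidableEq V] [Finite V] {Q R : Set (V × V)}

theorem eqvGen_edgeRel_of_epsVec_mem_span {e : V × V}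
    (h : epsVec e ∈ Submodule.span ℝ (epsVec '' R)) :
    Relation.EqvGen (edgeRel R) e.1 e.2 := by
  classical
  have := Fintype.ofFinite V
  let χ : V → ℝ := fun u ↦ if Relation.EqvGen (edgeRel R) e.1 u then 1 else 0
  have hχ (f : V × V) : dotProductBilin ℝ ℝ χ (epsVec f) = χ f.1 - χ f.2 := by
    simp [dotProductBilin, epsVec_eq_single_sub_single, dotProduct_sub]
  have hker : Submodule.span ℝ (epsVec '' R) ≤ LinearMap.ker (dotProductBilin ℝ ℝ χ) := by
    rw [Submodule.span_le]
    rintro _ ⟨f, hf, rfl⟩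
    have hiff : Relation.EqvGen (edgeRel R) e.1 f.1 ↔ Relation.EqvGen (edgeRel R) e.1 f.2 :=
      ⟨fun h₁ ↦ h₁.trans _ _ _ (.rel _ _ hf), fun h₂ ↦ h₂.trans _ _ _ (.symm _ _ (.rel _ _ hf))⟩
    simp [hχ, χ, hiff]
  have hzero : χ e.1 - χ e.2 = 0 := (hχ e).symm.trans (hker h)
  by_contra hne
  simp [χ, hne, Relation.EqvGen.refl] at hzero

theorem eqvGen_edgeRel_le_of_span_le
    (h : Submodule.span ℝ (epsVec '' Q) ≤ Submodule.span ℝ (epsVec '' R)) :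
    Relation.EqvGen (edgeRel Q) ≤ Relation.EqvGen (edgeRel R) := by
  have hle : Relation.EqvGen.setoid (edgeRel Q) ≤ Relation.EqvGen.setoid (edgeRel R) :=
    Setoid.eqvGen_le fun v w hvw ↦ eqvGen_edgeRel_of_epsVec_mem_span (e := (v, w))
      (h (Submodule.subset_span (Set.mem_image_of_mem _ hvw)))
  exact fun _ _ hab ↦ hle hab

theorem numComponents_eq_of_span_DE_eq
    (h : Submodule.span ℝ (DE R) = Submodule.span ℝ (DE Q)) :
    numComponents R = numComponents Q := by
  simp only [DE, span_convexHull_eq_span] at h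
  rw [numComponents, numComponents,
    le_antisymm (eqvGen_edgeRel_le_of_span_le h.le) (eqvGen_edgeRel_le_of_span_le h.ge)]

end Components

section Acyclic

theorem isAcyclicQ_of_potential {α β : Type*} [Preorder β] {E : Set (α × α)} (φ : α → β)
    (hφ : ∀ e ∈ E, φ e.1 < φ e.2) : IsAcyclicQ E := by
  rintro ⟨n, v, hn, hclosed, hE⟩
  have hmono : StrictMono (φ ∘ v) := Fin.strictMono_iff_lt_succ.2 fun i ↦ hφ _ (hE i)
  have hlt : φ (v 0) < φ (v (Fin.last n)) := hmono (Fin.lt_def.2 (Nat.zero_lt_of_lt hn))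
  rw [hclosed] at hlt
  exact hlt.false

theorem eq_of_eqvGen_edgeRel {V β : Type*} {E : Set (V × V)} {φ : V → β}
    (hφ : ∀ e ∈ E, φ e.1 = φ e.2) {a b : V} (h : Relation.EqvGen (edgeRel E) a b) :
    φ a = φ b :=
  Setoid.eqvGen_le (s := Setoid.ker φ) (fun _ _ hab ↦ hφ _ hab) h

theorem isAcyclicQ_contraction_of_potential {V β : Type*} [Preorder β] {Q R : Set (V × V)}
    (φ : V → β) (hR : ∀ e ∈ R, φ e.1 = φ e.2) (hQ : ∀ e ∈ Q \ R, φ e.1 < φ e.2) :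
    IsAcyclicQ (contraction Q R) := by
  refine isAcyclicQ_of_potential (Quot.lift φ fun _ _ ↦ eq_of_eqvGen_edgeRel hR) ?_
  rintro _ ⟨e, he, rfl⟩
  exact hQ e he

theorem isAcyclicQ_contraction_of_linearMap {V : Type*} [DecidableEq V] {Q R : Set (V × V)}
    (l : (V → ℝ) →ₗ[ℝ] ℝ) (hR : ∀ e ∈ R, l (epsVec e) = 0)
    (hQ : ∀ e ∈ Q \ R, l (epsVec e) < 0) : IsAcyclicQ (contraction Q R) := by
  simp only [epsVec_eq_single_sub_single, map_sub, sub_eq_zero, sub_neg] at hR hQ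
  exact isAcyclicQ_contraction_of_potential (fun v ↦ l (Pi.single v 1)) hR hQ

end Acyclic

/-- If `DE(R)` is a facet of `DE(Q)` and `|π_0(R)| = |π_0(Q)| + 1`, then the contraction
`Q/R` is acyclic. -/
theorem facet_contraction_acyclic {V : Type*} [Fintype V] [DecidableEq V]
    (Q1 R1 : Set (V × V)) (hloop : ∀ v : V, (v, v) ∉ Q1) (hsub : R1 ⊆ Q1)
    (hcomp : numComponents R1 = numComponents Q1 + 1)
    (hfacet : IsFacetOf (DE R1) (DE Q1)) :
    IsAcyclicQ (contraction Q1 R1) := by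
  obtain ⟨hface, hdim⟩ := hfacet
  obtain ⟨l, c, hR, hQ⟩ := hface.exists_linearMap_edges hloop
  have hspan : Submodule.span ℝ (DE R1) < Submodule.span ℝ (DE Q1) := by
    refine (Submodule.span_mono (convexHull_mono (Set.image_mono hsub))).lt_of_ne fun h ↦ ?_
    have := numComponents_eq_of_span_DE_eq h
    omega
  obtain ⟨f, hf⟩ := exists_linearMap_eq_const_of_span_lt (by omega) hspan hR
  refine isAcyclicQ_contraction_of_linearMap (l - f) (fun e he ↦ ?_) fun e he ↦ ?_
  · simp [hR _ (epsVec_mem_DE he), hf _ (epsVec_mem_DE (hsub he))]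
  · simpa [hf _ (epsVec_mem_DE he.1)] using hQ e he
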